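/- arXiv:1710.01936 — 2 statements merged into one kernel-verified Lean document; each statement's English description precedes it below -/
import Mathlib

section
/- For every prime p ≥ 3, every k ≥ 2 with k ≢ 1 (mod p), and every a ∈ [0,p], there exists t ∈ Z_p such that the minimum of s_k(A) over a-element subsets A ⊆ Z_p equals s_k({t, t+1, ..., t+a-1}). -/
/-- `skcount k A` is the number of `(k+1)`-tuples of elements of `A`
with `x 0 = x 1 + ... + x k`. -/
def skcount {p : ℕ} (k : ℕ) (A : Finset (ZMod p)) : ℕ :=
  ((Fintype.piFinset (fun _ : Fin (k + 1) => A)).filter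
    (fun x => x 0 = ∑ i : Fin k, x i.succ)).card

/-- The interval `{t, t+1, ..., t+a-1}` in `ZMod p`. -/
def interval {p : ℕ} (t : ZMod p) (a : ℕ) : Finset (ZMod p) :=
  (Finset.range a).image (fun j : ℕ => t + (j : ZMod p))

/-! Write `χ_A` for the indicator function of `A` and `r_A` for the function counting
representations as a sum of `k` elements of `A`, and let `I` be an interval with `|I| = |A| = a`.
Then `s_k(A)` is the sum of `r_A` over `A`, and since the total of `r_A` is `a ^ k`, minimizing it
amounts to maximizing the sum of `r_A` over the complement of `A`.

By induction on `k`, the function `r_A` is weakly majorized by `r_I`. The base of everything is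
Pollard's theorem: a lower bound for `∑ z, min t ((χ_A ∗ χ_B) z)` that is attained by intervals,
which says that `χ_A ∗ χ_B` is weakly majorized by the convolution of two intervals. In the
inductive step a sum of `r_A ∗ χ_A` over a set `B` is the pairing of `r_A` with `χ_B ∗ χ_{-A}`. Both
factors are majorized by their counterparts for intervals, which are bell-shaped; translating one
bell onto the center of the other makes them similarly sorted, so the rearrangement inequality
bounds the pairing by that for intervals.

Hence the sum of `r_A` over the complement of `A` is at most a sum of `r_I` over some interval of
length `p - a`. Since `k - 1` is invertible modulo `p`, a translate of `I` has its complement in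
that position relative to its own representation counts. -/

open Finset
open scoped Pointwise

section Majorization

variable {α : Type*}

theorem sum_le_sum_of_forall_notMem_le {F : α → ℕ} {S T : Finset α} (hcard : #T = #S)
    (hS : ∀ x ∈ S, ∀ y ∉ S, F y ≤ F x) : ∑ x ∈ T, F x ≤ ∑ x ∈ S, F x := by
  classical
  rw [← sum_sdiff_le_sum_sdiff]
  have hle : ∀ x ∈ S \ T, (T \ S).sup F ≤ F x := fun x hx =>
    Finset.sup_le fun y hy => hS x (mem_sdiff.mp hx).1 y (mem_sdiff.mp hy).2
  calc ∑ y ∈ T \ S, F y ≤ #(T \ S) • (T \ S).sup F := sum_le_card_nsmul _ _ _ fun _ => le_sup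
    _ = #(S \ T) • (T \ S).sup F := by rw [card_sdiff_comm hcard]
    _ ≤ ∑ x ∈ S \ T, F x := card_nsmul_le_sum _ _ _ hle

theorem exists_card_eq_and_forall_notMem_le [Fintype α] {β : Type*} [LinearOrder β] (F : α → β)
    {n : ℕ} (hn : n ≤ Fintype.card α) :
    ∃ S : Finset α, #S = n ∧ ∀ x ∈ S, ∀ y ∉ S, F y ≤ F x := by
  classical
  induction n with
  | zero => exact ⟨∅, card_empty, by simp⟩
  | succ n ih =>
    obtain ⟨S, hcard, hS⟩ := ih (by omega)
    have hne : Sᶜ.Nonempty := by rw [← card_pos, card_compl]; omega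
    obtain ⟨z, hz, hmax⟩ := exists_max_image Sᶜ F hne
    rw [mem_compl] at hz
    refine ⟨insert z S, by rw [card_insert_of_notMem hz, hcard], fun x hx y hy => ?_⟩
    have hyS : y ∉ S := fun h => hy (mem_insert_of_mem h)
    rcases mem_insert.mp hx with rfl | hx
    · exact hmax y (mem_compl.mpr hyS)
    · exact hS x hx y hyS

theorem exists_perm_monovary [Finite α] {β γ : Type*} [LinearOrder β] [LinearOrder γ] (f : α → β)
    (g : α → γ) : ∃ σ : Equiv.Perm α, Monovary (f ∘ σ) g := by
  let e := (Finite.equivFin α).symm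
  let σf := Tuple.sort (f ∘ e)
  let σg := Tuple.sort (g ∘ e)
  refine ⟨e.symm.trans (σg.symm.trans (σf.trans e)), ?_⟩
  have hsorted : Monovary (f ∘ e ∘ σf) (g ∘ e ∘ σg) :=
    (Tuple.monotone_sort (f ∘ e)).monovary (Tuple.monotone_sort (g ∘ e))
  simpa [Function.comp_def] using hsorted.comp_right (σg.symm ∘ e.symm)

/-- Weak majorization of `ℕ`-valued functions: for every `n`, the largest sum of `n` values of `f`
is at most the largest sum of `n` values of `F`. Both sums range over finite sets of arguments,
so that no decreasing rearrangement has to be chosen. -/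
def WeaklyMajorizedBy (f F : α → ℕ) : Prop :=
  ∀ B : Finset α, ∃ C : Finset α, #C = #B ∧ ∑ x ∈ B, f x ≤ ∑ x ∈ C, F x

namespace WeaklyMajorizedBy

variable {f g F G : α → ℕ}

theorem refl (f : α → ℕ) : WeaklyMajorizedBy f f := fun B => ⟨B, rfl, le_rfl⟩

theorem comp_perm (h : WeaklyMajorizedBy f F) (σ : Equiv.Perm α) :
    WeaklyMajorizedBy f (F ∘ σ) := fun B => by
  obtain ⟨C, hC, hle⟩ := h B
  exact ⟨C.map σ.symm.toEmbedding, by rw [card_map, hC], by simpa using hle⟩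

variable [Fintype α]

-- For a set `S` of `n` largest values of `F`, with minimum `t`, both `n`-sums are compared with
-- `n * t` plus the total excess over `t`.
theorem of_sum_min_le (hsum : ∑ x, f x = ∑ x, F x)
    (hmin : ∀ y, ∑ x, min (F y) (F x) ≤ ∑ x, min (F y) (f x)) : WeaklyMajorizedBy f F := by
  intro B
  obtain ⟨S, hcard, hS⟩ := exists_card_eq_and_forall_notMem_le F (card_le_univ B)
  refine ⟨S, hcard, ?_⟩
  rcases S.eq_empty_or_nonempty with rfl | hne
  · simp [card_eq_zero.mp hcard.symm]
  obtain ⟨y, hy, hyS⟩ := exists_min_image S F hne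
  have hsplit (h : α → ℕ) : ∑ x, min (F y) (h x) + ∑ x, (h x - F y) = ∑ x, h x := by
    rw [← sum_add_distrib]
    exact sum_congr rfl fun x _ => by omega
  have hexcess : ∑ x, (f x - F y) ≤ ∑ x, (F x - F y) := by
    have := hmin y
    have := hsplit f
    have := hsplit F
    omega
  calc ∑ x ∈ B, f x ≤ ∑ x ∈ B, (F y + (f x - F y)) := sum_le_sum fun _ _ => le_add_tsub
    _ = #B * F y + ∑ x ∈ B, (f x - F y) := by rw [sum_add_distrib, sum_const, smul_eq_mul]
    _ ≤ #B * F y + ∑ x, (f x - F y) := by gcongr; exact subset_univ B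
    _ ≤ #B * F y + ∑ x, (F x - F y) := by gcongr
    _ = #S * F y + ∑ x ∈ S, (F x - F y) := by
        rw [hcard, sum_subset (subset_univ S) fun x _ hx => Nat.sub_eq_zero_of_le (hS y hy x hx)]
    _ = ∑ x ∈ S, (F y + (F x - F y)) := by rw [sum_add_distrib, sum_const, smul_eq_mul]
    _ = ∑ x ∈ S, F x := sum_congr rfl fun x hx => Nat.add_sub_cancel' (hyS x hx)

-- The superlevel sets of `g` consist of largest values of `F`.
theorem sum_mul_le_of_monovary (h : WeaklyMajorizedBy f F) (hFg : Monovary F g) :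
    ∑ x, f x * g x ≤ ∑ x, F x * g x := by
  have layer_cake (u : α → ℕ) :
      ∑ x, u x * g x = ∑ t ∈ range (univ.sup g), ∑ x with t < g x, u x := by
    simp_rw [sum_filter]
    rw [sum_comm]
    refine sum_congr rfl fun x _ => ?_
    have hlevels : {t ∈ range (univ.sup g) | t < g x} = range (g x) := by
      ext t
      simpa using fun ht : t < g x => ht.trans_le (le_sup (mem_univ x))
    rw [← sum_filter, hlevels, sum_const, card_range, smul_eq_mul, mul_comm]
  rw [layer_cake, layer_cake]
  refine sum_le_sum fun t _ => ?_
  obtain ⟨C, hC, hle⟩ := h ({x | t < g x} : Finset α)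
  refine hle.trans (sum_le_sum_of_forall_notMem_le hC fun x hx y hy => hFg ?_)
  simp only [mem_filter_univ, not_lt] at hx hy
  exact hy.trans_lt hx

theorem sum_mul_le_sum_mul (hf : WeaklyMajorizedBy f F) (hg : WeaklyMajorizedBy g G)
    (hFG : Monovary F G) : ∑ x, f x * g x ≤ ∑ x, F x * G x := by
  obtain ⟨σ, hσ⟩ := exists_perm_monovary F g
  calc ∑ x, f x * g x ≤ ∑ x, (F ∘ σ) x * g x := (hf.comp_perm σ).sum_mul_le_of_monovary hσ
    _ = ∑ x, g x * (F ∘ σ) x := by simp only [mul_comm]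
    _ ≤ ∑ x, (G ∘ σ) x * (F ∘ σ) x :=
        (hg.comp_perm σ).sum_mul_le_of_monovary (hFG.symm.comp_right σ)
    _ = ∑ x, F x * G x := by
        simp only [Function.comp_apply, mul_comm (G _)]
        exact Equiv.sum_comp σ fun x => F x * G x

end WeaklyMajorizedBy

end Majorization

section AddConvolution

variable {G : Type*} [AddCommGroup G] [DecidableEq G]

theorem addConvolution_comm (A B : Finset G) (z : G) :
    A.addConvolution B z = B.addConvolution A z :=
  card_equiv (Equiv.prodComm G G) (by simp [add_comm, and_comm])

theorem addConvolution_mono_left {A A' : Finset G} (h : A ⊆ A') (B : Finset G) (z : G) :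
    A.addConvolution B z ≤ A'.addConvolution B z := by
  unfold addConvolution
  gcongr

theorem addConvolution_union_left {A A' : Finset G} (h : Disjoint A A') (B : Finset G) (z : G) :
    (A ∪ A').addConvolution B z = A.addConvolution B z + A'.addConvolution B z := by
  simp only [addConvolution]
  rw [union_product, filter_union, card_union_of_disjoint]
  exact disjoint_filter_filter (disjoint_product.mpr (Or.inl h))

theorem addConvolution_union_right (A : Finset G) {B B' : Finset G} (h : Disjoint B B') (z : G) :
    A.addConvolution (B ∪ B') z = A.addConvolution B z + A.addConvolution B' z := by
  simp only [addConvolution_comm A, addConvolution_union_left h]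

theorem sum_addConvolution [Fintype G] (A B : Finset G) :
    ∑ z, A.addConvolution B z = #A * #B := by
  rw [← card_product]
  exact (card_eq_sum_card_fiberwise fun _ _ => mem_univ _).symm

theorem addConvolution_eq_union_inter_add_sdiff_sdiff (A B : Finset G) (z : G) :
    A.addConvolution B z =
      (A ∪ B).addConvolution (A ∩ B) z + (A \ B).addConvolution (B \ A) z := by
  calc A.addConvolution B z
      = A.addConvolution (A ∩ B) z + A.addConvolution (B \ A) z := by
        rw [← addConvolution_union_right A (inter_comm A B ▸ disjoint_sdiff_inter B A).symm,
          union_comm, inter_comm, sdiff_union_inter]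
    _ = A.addConvolution (A ∩ B) z +
          ((A ∩ B).addConvolution (B \ A) z + (A \ B).addConvolution (B \ A) z) := by
        rw [← addConvolution_union_left (disjoint_sdiff_inter A B).symm, union_comm (A ∩ B),
          sdiff_union_inter]
    _ = (A ∪ (B \ A)).addConvolution (A ∩ B) z + (A \ B).addConvolution (B \ A) z := by
        rw [addConvolution_union_left disjoint_sdiff, addConvolution_comm (A ∩ B), add_assoc]
    _ = (A ∪ B).addConvolution (A ∩ B) z + (A \ B).addConvolution (B \ A) z := by
        rw [union_sdiff_self_eq_union]

theorem card_mul_card_add_sum_min_addConvolution_sdiff_le [Fintype G] (A B : Finset G) (u : ℕ) :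
    #(A ∪ B) * #(A ∩ B) + ∑ z, min u ((A \ B).addConvolution (B \ A) z) ≤
      ∑ z, min (#(A ∩ B) + u) (A.addConvolution B z) := by
  rw [← sum_addConvolution, ← sum_add_distrib]
  gcongr with z
  have : (A ∪ B).addConvolution (A ∩ B) z ≤ #(A ∩ B) := addConvolution_le_card_right
  rw [addConvolution_eq_union_inter_add_sdiff_sdiff A B]
  omega

theorem sum_min_addConvolution_vadd [Fintype G] (d : G) (A B : Finset G) (t : ℕ) :
    ∑ z, min t ((d +ᵥ A).addConvolution B z) = ∑ z, min t (A.addConvolution B z) := by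
  simp only [vadd_addConvolution_eq_addConvolution_neg_add]
  exact Equiv.sum_comp (Equiv.addLeft (-d)) fun z => min t (A.addConvolution B z)

end AddConvolution

section Pollard

theorem card_inter_add_mul_card_add_card_sub {α : Type*} [DecidableEq α] (A B : Finset α) {u : ℕ}
    (hu : u ≤ #(A \ B)) :
    (#(A ∩ B) + u) * (#A + #B - (#(A ∩ B) + u)) =
      #(A ∪ B) * #(A ∩ B) + u * (#(A \ B) + #(B \ A) - u) := by
  have hunion := card_union_add_card_inter A B
  have hA := card_sdiff_add_card_inter A B
  have hB := inter_comm A B ▸ card_sdiff_add_card_inter B A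
  obtain ⟨v, hv⟩ := Nat.exists_eq_add_of_le hu
  rw [show #A + #B - (#(A ∩ B) + u) = #(A ∩ B) + v + #(B \ A) by omega,
    show #(A ∪ B) = #(A ∩ B) + v + #(B \ A) + u by omega,
    show #(A \ B) + #(B \ A) - u = v + #(B \ A) by omega]
  ring

theorem card_le_modulus {p : ℕ} [NeZero p] (A : Finset (ZMod p)) : #A ≤ p :=
  (card_le_univ A).trans_eq (ZMod.card p)

variable {p : ℕ} [Fact p.Prime]

-- Otherwise `A + (B - b) ⊆ A` for every `b ∈ B`, contradicting the Cauchy-Davenport theorem.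
theorem exists_vadd_inter_nonempty_not_subset {A B : Finset (ZMod p)} (hA : A.Nonempty)
    (hAp : #A < p) (hB : 1 < #B) : ∃ d : ZMod p, ((d +ᵥ A) ∩ B).Nonempty ∧ ¬ B ⊆ d +ᵥ A := by
  by_contra! hcon
  obtain ⟨b, hb⟩ := card_pos.mp (zero_lt_one.trans hB)
  have hsub : A + (-b +ᵥ B) ⊆ A := by
    refine add_subset_iff.mpr fun x hx y hy => ?_
    rw [mem_neg_vadd_finset_iff, vadd_eq_add] at hy
    have hbx : b ∈ (b - x) +ᵥ A := mem_vadd_finset.mpr ⟨x, hx, sub_add_cancel b x⟩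
    have := hcon (b - x) ⟨b, mem_inter.mpr ⟨hbx, hb⟩⟩ hy
    rw [← neg_vadd_mem_iff, vadd_eq_add] at this
    convert this using 1
    ring
  have hCD := ZMod.cauchy_davenport Fact.out hA (t := -b +ᵥ B) (Nonempty.vadd_finset ⟨b, hb⟩)
  have := card_le_card hsub
  rw [card_vadd_finset] at hCD
  omega

theorem pollard_of_card_add_card_le (A B : Finset (ZMod p)) {t : ℕ} (htA : t ≤ #A) (htB : t ≤ #B)
    (hp : #A + #B ≤ p + t) : t * (#A + #B - t) ≤ ∑ z, min t (A.addConvolution B z) := by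
  induction hn : #B using Nat.strong_induction_on generalizing A B t with
  | _ n ih =>
  subst hn
  rcases htB.eq_or_lt with rfl | htB
  · simp [min_eq_right addConvolution_le_card_right, sum_addConvolution, mul_comm]
  rcases t.eq_zero_or_pos with rfl | ht
  · simp
  obtain ⟨d, hne, hsub⟩ := exists_vadd_inter_nonempty_not_subset
    (card_pos.mp (ht.trans_le htA)) (by omega : #A < p) (by omega : 1 < #B)
  rw [← sum_min_addConvolution_vadd d, ← card_vadd_finset d A]
  rw [← card_vadd_finset d A] at htA hp
  generalize d +ᵥ A = C at *
  have hinter_pos : 0 < #(C ∩ B) := hne.card_pos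
  have hinter_lt : #(C ∩ B) < #B :=
    card_lt_card ⟨inter_subset_right, fun h => hsub (h.trans inter_subset_left)⟩
  have hunion := card_union_add_card_inter C B
  have hCB := card_sdiff_add_card_inter C B
  have hBC := inter_comm C B ▸ card_sdiff_add_card_inter B C
  rcases le_total t #(C ∩ B) with hti | hti
  · calc t * (#C + #B - t) = t * (#(C ∪ B) + #(C ∩ B) - t) := by rw [hunion]
      _ ≤ ∑ z, min t ((C ∪ B).addConvolution (C ∩ B) z) :=
          ih _ hinter_lt _ _ (by omega) hti (by omega) rfl
      _ ≤ ∑ z, min t (C.addConvolution B z) := by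
          gcongr with z
          rw [addConvolution_eq_union_inter_add_sdiff_sdiff C]
          exact Nat.le_add_right _ _
  · obtain ⟨u, rfl⟩ := Nat.exists_eq_add_of_le hti
    calc (#(C ∩ B) + u) * (#C + #B - (#(C ∩ B) + u))
        = #(C ∪ B) * #(C ∩ B) + u * (#(C \ B) + #(B \ C) - u) :=
          card_inter_add_mul_card_add_card_sub C B (by omega)
      _ ≤ #(C ∪ B) * #(C ∩ B) + ∑ z, min u ((C \ B).addConvolution (B \ C) z) := by
          gcongr
          exact ih _ (by omega) _ _ (by omega) (by omega) (by omega) rfl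
      _ ≤ ∑ z, min (#(C ∩ B) + u) (C.addConvolution B z) :=
          card_mul_card_add_sum_min_addConvolution_sdiff_le C B u

theorem pollard (A B : Finset (ZMod p)) {t : ℕ} (htA : t ≤ #A) (htB : t ≤ #B) :
    t * min p (#A + #B - t) ≤ ∑ z, min t (A.addConvolution B z) := by
  rcases le_total (#A + #B) (p + t) with hp | hp
  · exact (Nat.mul_le_mul_left t (min_le_right _ _)).trans
      (pollard_of_card_add_card_le A B htA htB hp)
  have hBp : #B ≤ p := card_le_modulus B
  obtain ⟨A', hA', hcard⟩ := exists_subset_card_eq (show p + t - #B ≤ #A by omega)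
  calc t * min p (#A + #B - t) ≤ t * (#A' + #B - t) := by
        gcongr
        omega
    _ ≤ ∑ z, min t (A'.addConvolution B z) :=
        pollard_of_card_add_card_le A' B (by omega) htB (by omega)
    _ ≤ ∑ z, min t (A.addConvolution B z) := by
        gcongr
        exact addConvolution_mono_left hA' _ _

end Pollard

section Interval

variable {p : ℕ}

theorem mem_interval {t x : ZMod p} {a : ℕ} : x ∈ interval t a ↔ ∃ j < a, t + (j : ZMod p) = x := by
  simp [interval]

theorem injOn_add_natCast (t : ZMod p) {a : ℕ} (ha : a ≤ p) :
    Set.InjOn (fun j : ℕ => t + (j : ZMod p)) (range a) := by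
  intro i hi j hj hij
  rw [coe_range, Set.mem_Iio] at hi hj
  have := (ZMod.natCast_eq_natCast_iff' i j p).mp (add_left_cancel hij)
  rwa [Nat.mod_eq_of_lt (hi.trans_le ha), Nat.mod_eq_of_lt (hj.trans_le ha)] at this

theorem card_interval (t : ZMod p) {a : ℕ} (ha : a ≤ p) : #(interval t a) = a := by
  rw [interval, card_image_of_injOn (injOn_add_natCast t ha), card_range]

theorem sum_interval {M : Type*} [AddCommMonoid M] (f : ZMod p → M) (t : ZMod p) {a : ℕ}
    (ha : a ≤ p) : ∑ x ∈ interval t a, f x = ∑ j ∈ range a, f (t + j) :=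
  sum_image (injOn_add_natCast t ha)

theorem vadd_interval (s t : ZMod p) (a : ℕ) : s +ᵥ interval t a = interval (s + t) a := by
  ext x
  simp only [mem_vadd_finset, mem_interval, vadd_eq_add, add_assoc]
  constructor
  · rintro ⟨_, ⟨j, hj, rfl⟩, rfl⟩
    exact ⟨j, hj, rfl⟩
  · rintro ⟨j, hj, rfl⟩
    exact ⟨_, ⟨j, hj, rfl⟩, rfl⟩

theorem neg_interval (t : ZMod p) {a : ℕ} (ha : a ≤ p) :
    -interval t a = interval (1 - (a : ZMod p) - t) a := by
  refine eq_of_subset_of_card_le (fun x hx => ?_) ?_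
  · rw [mem_neg', mem_interval] at hx
    obtain ⟨j, hj, hx⟩ := hx
    obtain ⟨i, rfl⟩ := Nat.exists_eq_add_of_lt hj
    refine mem_interval.mpr ⟨i, by omega, ?_⟩
    push_cast
    linear_combination -hx
  · rw [card_neg, card_interval _ ha, card_interval _ ha]

theorem compl_interval [NeZero p] (t : ZMod p) {a : ℕ} (ha : a ≤ p) :
    (interval t a)ᶜ = interval (t + (a : ZMod p)) (p - a) := by
  refine (eq_of_subset_of_card_le (fun x hx => ?_) ?_).symm
  · obtain ⟨i, hi, rfl⟩ := mem_interval.mp hx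
    rw [mem_compl, mem_interval]
    rintro ⟨j, hj, hij⟩
    have := injOn_add_natCast t le_rfl (mem_coe.mpr (mem_range.mpr (by omega : j < p)))
      (mem_coe.mpr (mem_range.mpr (by omega : a + i < p))) (by simp [hij, add_assoc])
    omega
  · rw [card_compl, ZMod.card, card_interval _ ha, card_interval _ (Nat.sub_le _ _)]

variable [Fact p.Prime]

-- The solutions `x` of `x + y = z - t` with `x` and `y` in the shortened intervals, shifted by
-- `0, …, t`, solve `x + y = z` in the full intervals, and by the Cauchy-Davenport theorem shifting
-- produces at least `t` new ones.
theorem addConvolution_interval_sub_le (u v z : ZMod p) {m n t : ℕ} (hm : m ≤ p) :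
    (interval u (m - t)).addConvolution (interval v (n - t)) (z - t) ≤
      (interval u m).addConvolution (interval v n) z - t := by
  simp only [← card_inter_vadd_neg]
  rcases eq_empty_or_nonempty (interval u (m - t) ∩ ((z - t) +ᵥ -interval v (n - t)))
    with hempty | hne
  · simp [hempty]
  generalize hS : interval u (m - t) ∩ ((z - t) +ᵥ -interval v (n - t)) = S at hne ⊢
  have hSm : #S ≤ m - t := by
    rw [← hS]
    exact (card_le_card inter_subset_left).trans_eq (card_interval u (by omega))
  have htm : t < m := by have := hne.card_pos; omega
  have hsub : S + interval 0 (t + 1) ⊆ interval u m ∩ (z +ᵥ -interval v n) := by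
    refine add_subset_iff.mpr fun x hx y hy => ?_
    obtain ⟨l, hl, rfl⟩ := mem_interval.mp hy
    rw [← hS, mem_inter, ← neg_vadd_mem_iff, mem_neg', vadd_eq_add, mem_interval,
      mem_interval] at hx
    obtain ⟨⟨i, hi, rfl⟩, j, hj, hx⟩ := hx
    obtain ⟨r, rfl⟩ := Nat.exists_eq_add_of_le (Nat.le_of_lt_succ hl)
    rw [mem_inter, ← neg_vadd_mem_iff, mem_neg', vadd_eq_add, mem_interval, mem_interval]
    refine ⟨⟨i + l, by omega, ?_⟩, j + r, by omega, ?_⟩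
    · push_cast
      ring
    · push_cast at hx ⊢
      linear_combination hx
  have hcard := card_interval (0 : ZMod p) (show t + 1 ≤ p by omega)
  have hCD := ZMod.cauchy_davenport Fact.out hne (card_pos.mp (hcard.ge.trans_lt' t.succ_pos))
  have := card_le_card hsub
  omega

theorem sum_min_addConvolution_interval_le (u v : ZMod p) {m n t : ℕ} (hm : m ≤ p) (hn : n ≤ p)
    (htm : t ≤ m) (htn : t ≤ n) :
    ∑ z, min t ((interval u m).addConvolution (interval v n) z) ≤ t * min p (m + n - t) := by
  have hexcess : (m - t) * (n - t) ≤ ∑ z, ((interval u m).addConvolution (interval v n) z - t) := by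
    calc (m - t) * (n - t)
        = ∑ z, (interval u (m - t)).addConvolution (interval v (n - t)) z := by
          rw [sum_addConvolution, card_interval _ (by omega), card_interval _ (by omega)]
      _ = ∑ z, (interval u (m - t)).addConvolution (interval v (n - t)) (z - t) :=
          (Equiv.sum_comp (Equiv.subRight (t : ZMod p)) _).symm
      _ ≤ _ := sum_le_sum fun z _ => addConvolution_interval_sub_le u v z hm
  have hsplit : ∑ z, min t ((interval u m).addConvolution (interval v n) z) +
      ∑ z, ((interval u m).addConvolution (interval v n) z - t) = m * n := by
    rw [← sum_add_distrib, ← card_interval u hm, ← card_interval v hn, ← sum_addConvolution,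
      card_interval u hm, card_interval v hn]
    exact sum_congr rfl fun z _ => by omega
  rw [mul_min_of_nonneg _ _ (Nat.zero_le t)]
  refine le_min ?_ ?_
  · calc ∑ z, min t ((interval u m).addConvolution (interval v n) z) ≤ ∑ _z : ZMod p, t :=
          sum_le_sum fun _ _ => min_le_left _ _
      _ = t * p := by rw [sum_const, card_univ, ZMod.card, smul_eq_mul, mul_comm]
  · obtain ⟨m, rfl⟩ := Nat.exists_eq_add_of_le htm
    obtain ⟨n, rfl⟩ := Nat.exists_eq_add_of_le htn
    rw [show t + m + (t + n) - t = t + m + n by omega]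
    simp only [Nat.add_sub_cancel_left] at hexcess
    linarith

theorem weaklyMajorizedBy_addConvolution_interval (A B : Finset (ZMod p)) (u v : ZMod p) :
    WeaklyMajorizedBy (A.addConvolution B)
      ((interval u #A).addConvolution (interval v #B)) := by
  have hA : #A ≤ p := card_le_modulus A
  have hB : #B ≤ p := card_le_modulus B
  refine .of_sum_min_le ?_ fun y => ?_
  · simp only [sum_addConvolution, card_interval _ hA, card_interval _ hB]
  have htA := (addConvolution_le_card_left (A := interval u #A) (B := interval v #B)
    (x := y)).trans_eq (card_interval u hA)
  have htB := (addConvolution_le_card_right (A := interval u #A) (B := interval v #B)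
    (x := y)).trans_eq (card_interval v hB)
  exact (sum_min_addConvolution_interval_le u v hA hB htA htB).trans (pollard A B htA htB)

end Interval

section SetConv

variable {G : Type*} [AddCommGroup G]

/-- The convolution `f ∗ χ_A` of a function with the indicator function `χ_A` of a finite set.
Iterating it with one fixed set yields the representation counts of that set. -/
def setConv (f : G → ℕ) (A : Finset G) (z : G) : ℕ := ∑ x ∈ A, f (z - x)

theorem setConv_comp_add_right (f : G → ℕ) (A : Finset G) (s z : G) :
    setConv (fun x => f (x + s)) A z = setConv f A (z + s) := by
  simp only [setConv, sub_add_eq_add_sub]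

theorem sum_setConv [Fintype G] (f : G → ℕ) (A : Finset G) :
    ∑ z, setConv f A z = #A * ∑ z, f z := by
  simp only [setConv]
  rw [sum_comm, ← smul_eq_mul, ← sum_const]
  exact sum_congr rfl fun x _ => Equiv.sum_comp (Equiv.subRight x) f

variable [DecidableEq G]

theorem setConv_vadd (f : G → ℕ) (d : G) (A : Finset G) (z : G) :
    setConv f (d +ᵥ A) z = setConv f A (z - d) := by
  simp only [setConv, vadd_finset_def, vadd_eq_add, sub_sub]
  exact sum_image (add_right_injective d).injOn

theorem setConv_setConv_single (A B : Finset G) (z : G) :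
    setConv (setConv (Pi.single 0 1) A) B z = A.addConvolution B z := by
  simp only [addConvolution, setConv, card_filter, sum_product_right, Pi.single_apply, sub_sub,
    sub_eq_zero, add_comm, eq_comm]

theorem sum_setConv_eq_sum_mul_addConvolution_neg [Fintype G] (f : G → ℕ) (A B : Finset G) :
    ∑ x ∈ B, setConv f A x = ∑ y, f y * B.addConvolution (-A) y := by
  calc ∑ x ∈ B, setConv f A x = ∑ q ∈ B ×ˢ A, f (q.1 - q.2) := (sum_product' ..).symm
    _ = ∑ y, ∑ q ∈ B ×ˢ A with q.1 - q.2 = y, f y := (sum_fiberwise' ..).symm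
    _ = ∑ y, f y * B.addConvolution (-A) y := by
        simp only [sum_const, card_sub_eq, smul_eq_mul, mul_comm]

end SetConv

section Bell

variable {p : ℕ} {c c' : ℤ} {F G : ZMod p → ℕ}

/-- `F` is bell-shaped about `c / 2`: symmetric about this point and nonincreasing along the
half-turn that starts there. The center is recorded through its double `c`, since `c` may be odd;
the half-turn consists of the classes of the integers between `c / 2` and `(c + p) / 2`. -/
structure IsBellAbout (F : ZMod p → ℕ) (c : ℤ) : Prop where
  symm : ∀ x : ZMod p, F (c - x) = F x
  step : ∀ i : ℤ, c ≤ 2 * i → 2 * i + 2 ≤ c + p → F (i + 1) ≤ F i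

theorem exists_intCast_eq [NeZero p] (b : ℤ) (x : ZMod p) :
    ∃ i : ℤ, b ≤ i ∧ i < b + p ∧ (i : ZMod p) = x :=
  ⟨b + (x - b).val, by omega, by have := (x - b).val_lt; omega, by simp⟩

namespace IsBellAbout

theorem le_of_abs_le (hF : IsBellAbout F c) {i j : ℤ} (hij : |2 * i - c| ≤ |2 * j - c|)
    (hj : |2 * j - c| ≤ p) : F j ≤ F i := by
  have hright (i j : ℤ) (hi : c ≤ 2 * i) (hij : i ≤ j) : 2 * j ≤ c + p → F j ≤ F i := by
    induction j, hij using Int.leInduction with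
    | base => exact fun _ => le_rfl
    | succ j hij ih =>
      intro hj
      rw [Int.cast_add, Int.cast_one]
      exact (hF.step j (by omega) (by omega)).trans (ih (by omega))
  have hsymm (i : ℤ) : F ((c - i : ℤ) : ZMod p) = F i := by rw [Int.cast_sub, hF.symm]
  rw [abs_le] at hj
  rcases le_total c (2 * i) with hi | hi <;> rcases le_total c (2 * j) with hj' | hj' <;>
    rw [abs_eq_max_neg, abs_eq_max_neg] at hij
  · exact hright i j hi (by omega) (by omega)
  · rw [← hsymm j]
    exact hright i (c - j) hi (by omega) (by omega)
  · rw [← hsymm i]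
    exact hright (c - i) j (by omega) (by omega) (by omega)
  · rw [← hsymm i, ← hsymm j]
    exact hright (c - i) (c - j) (by omega) (by omega) (by omega)

theorem single : IsBellAbout (Pi.single (0 : ZMod p) 1) 0 where
  symm x := by simp only [Int.cast_zero, zero_sub, Pi.single_apply, neg_eq_zero]
  step i hi hip := by
    have hne : (i : ZMod p) + 1 ≠ 0 := fun h => by
      have hdvd : (p : ℤ) ∣ i + 1 :=
        (ZMod.intCast_zmod_eq_zero_iff_dvd _ p).mp (by exact_mod_cast h)
      have := Int.le_of_dvd (by omega) hdvd
      omega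
    rw [Pi.single_eq_of_ne hne]
    exact Nat.zero_le _

theorem comp_add_right (hF : IsBellAbout F c) (s : ℤ) :
    IsBellAbout (fun x : ZMod p => F (x + (s : ZMod p))) (c - 2 * s) where
  symm x := by
    rw [← hF.symm (x + (s : ZMod p))]
    congr 1
    push_cast
    ring
  step i hi hip := by
    have := hF.step (i + s) (by omega) (by omega)
    rwa [Int.cast_add, add_right_comm] at this

theorem setConv_interval (hF : IsBellAbout F c) (u : ℤ) {m : ℕ} (hm : m ≤ p) :
    IsBellAbout (setConv F (interval (u : ZMod p) m)) (c + 2 * u + m - 1) := by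
  have hconv (z : ZMod p) :
      setConv F (interval (u : ZMod p) m) z = ∑ l ∈ range m, F (z - u - l) := by
    simp only [setConv, sum_interval _ _ hm, sub_sub]
  refine ⟨fun z => ?_, fun i hi hip => ?_⟩
  · rw [hconv, hconv, ← sum_range_reflect]
    refine sum_congr rfl fun l hl => ?_
    obtain ⟨r, rfl⟩ := Nat.exists_eq_add_of_lt (mem_range.mp hl)
    rw [← hF.symm, show l + r + 1 - 1 - l = r by omega]
    congr 1
    push_cast
    ring
  · have hends : F (i + 1 - u) ≤ F (i + 1 - u - m) := by
      rcases le_total (2 * (i + 1 - u) - c) p with h | h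
      · have := hF.le_of_abs_le (i := i + 1 - u - m) (j := i + 1 - u)
          (by simp only [abs_eq_max_neg]; omega) (by simp only [abs_eq_max_neg]; omega)
        exact_mod_cast this
      · have := hF.le_of_abs_le (i := i + 1 - u - m) (j := i + 1 - u - p)
          (by simp only [abs_eq_max_neg]; omega) (by simp only [abs_eq_max_neg]; omega)
        simpa using this
    have htelescope := (sum_range_succ (fun l : ℕ => F (i + 1 - u - l)) m).symm.trans
      (sum_range_succ' (fun l : ℕ => F (i + 1 - u - l)) m)
    have hshift (l : ℕ) : (i : ZMod p) + 1 - u - (l + 1 : ℕ) = i - u - l := by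
      push_cast
      ring
    simp only [hshift, Nat.cast_zero, sub_zero] at htelescope
    rw [hconv, hconv]
    omega

theorem exists_setConv_interval (hF : IsBellAbout F c) (u : ZMod p) {m : ℕ} (hm : m ≤ p) :
    ∃ c', IsBellAbout (setConv F (interval u m)) c' := by
  obtain ⟨u, rfl⟩ := ZMod.intCast_surjective u
  exact ⟨_, hF.setConv_interval u hm⟩

theorem exists_addConvolution_interval (u v : ZMod p) {m n : ℕ} (hm : m ≤ p) (hn : n ≤ p) :
    ∃ c, IsBellAbout ((interval u m).addConvolution (interval v n)) c := by
  obtain ⟨_, hu⟩ := single.exists_setConv_interval u hm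
  obtain ⟨c, huv⟩ := hu.exists_setConv_interval v hn
  exact ⟨c, funext (setConv_setConv_single (interval u m) (interval v n)) ▸ huv⟩

-- Each point gets an integer representative at distance at most a half-turn from both centers.
theorem monovary [NeZero p] (hF : IsBellAbout F c) (hG : IsBellAbout G c') (hcc' : c ≤ c')
    (hc'c : c' ≤ c + 1) : Monovary F G := by
  intro x y hxy
  obtain ⟨i, hi, hi', rfl⟩ := exists_intCast_eq ((c + 2 - p) / 2) x
  obtain ⟨j, hj, hj', rfl⟩ := exists_intCast_eq ((c + 2 - p) / 2) y
  have hGdist : |2 * j - c'| < |2 * i - c'| := by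
    by_contra! h
    exact (hG.le_of_abs_le h (abs_le.mpr ⟨by omega, by omega⟩)).not_gt hxy
  have hFdist : |2 * j - c| ≤ |2 * i - c| := by
    simp only [abs_eq_max_neg] at hGdist ⊢
    omega
  exact hF.le_of_abs_le hFdist (abs_le.mpr ⟨by omega, by omega⟩)

theorem exists_monovary_comp_add_right [NeZero p] (hF : IsBellAbout F c) (hG : IsBellAbout G c') :
    ∃ s : ZMod p, Monovary (fun x => F (x + s)) G :=
  ⟨((c - c') / 2 : ℤ), (hG.monovary (hF.comp_add_right _) (by omega) (by omega)).symm⟩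

end IsBellAbout

-- Moving `A` to the other side turns the sum into a pairing of `f` with `χ_B ∗ χ_{-A}`. The
-- counterpart of this convolution for intervals is bell-shaped, as is `F`, and a translation of
-- `F` makes the two bells similarly sorted.
theorem exists_sum_setConv_le_sum_interval [Fact p.Prime] {f : ZMod p → ℕ}
    (hf : WeaklyMajorizedBy f F) (hF : IsBellAbout F c) (A B : Finset (ZMod p)) (u : ZMod p) :
    ∃ v, ∑ x ∈ B, setConv f A x ≤ ∑ x ∈ interval v #B, setConv F (interval u #A) x := by
  have hA : #A ≤ p := card_le_modulus A
  have hB : #B ≤ p := card_le_modulus B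
  have hmaj : WeaklyMajorizedBy (B.addConvolution (-A))
      ((interval 0 #B).addConvolution (-interval u #A)) := by
    rw [neg_interval u hA, ← card_neg A]
    exact weaklyMajorizedBy_addConvolution_interval B (-A) _ _
  obtain ⟨c', hbell⟩ : ∃ c', IsBellAbout
      ((interval 0 #B).addConvolution (-interval u #A)) c' := by
    rw [neg_interval u hA]
    exact IsBellAbout.exists_addConvolution_interval _ _ hB hA
  obtain ⟨s, hs⟩ := hF.exists_monovary_comp_add_right hbell
  refine ⟨s, ?_⟩
  calc ∑ x ∈ B, setConv f A x = ∑ y, f y * B.addConvolution (-A) y :=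
        sum_setConv_eq_sum_mul_addConvolution_neg f A B
    _ ≤ ∑ y, F (y + s) * (interval 0 #B).addConvolution (-interval u #A) y :=
        (hf.comp_perm (Equiv.addRight s)).sum_mul_le_sum_mul hmaj hs
    _ = ∑ x ∈ interval 0 #B, setConv (fun y => F (y + s)) (interval u #A) x :=
        (sum_setConv_eq_sum_mul_addConvolution_neg _ _ _).symm
    _ = ∑ x ∈ interval s #B, setConv F (interval u #A) x := by
        simp only [setConv_comp_add_right, sum_interval _ _ hB, zero_add, add_comm s]

end Bell

section RepCount

theorem card_filter_piFinset_succ {α : Type*} {k : ℕ} (A : Finset α)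
    (P : (Fin (k + 1) → α) → Prop) [DecidablePred P] :
    #{x ∈ Fintype.piFinset (fun _ : Fin (k + 1) => A) | P x} =
      ∑ y ∈ A, #{x ∈ Fintype.piFinset (fun _ : Fin k => A) | P (Fin.cons y x)} := by
  simp only [card_filter]
  rw [← sum_product']
  refine (sum_equiv (Fin.consEquiv fun _ => α) (fun q => ?_) fun q _ => rfl).symm
  simp [Fin.forall_fin_succ]

/-- The number of representations of `z` as an ordered sum of `k` elements of `A`. -/
def repCount {G : Type*} [AddCommMonoid G] [DecidableEq G] (k : ℕ) (A : Finset G) (z : G) : ℕ :=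
  #{x ∈ Fintype.piFinset (fun _ : Fin k => A) | z = ∑ i, x i}

theorem skcount_eq_sum_repCount {p : ℕ} (k : ℕ) (A : Finset (ZMod p)) :
    skcount k A = ∑ z ∈ A, repCount k A z := by
  simp only [skcount, card_filter_piFinset_succ, Fin.cons_zero, Fin.cons_succ, repCount]

section AddCommGroup

variable {G : Type*} [AddCommGroup G] [DecidableEq G]

theorem repCount_zero (A : Finset G) : repCount 0 A = Pi.single 0 1 := by
  ext z
  by_cases hz : z = 0 <;> simp [repCount, hz]

theorem repCount_succ (k : ℕ) (A : Finset G) :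
    repCount (k + 1) A = setConv (repCount k A) A := by
  ext z
  simp only [repCount, card_filter_piFinset_succ, setConv, Fin.sum_univ_succ, Fin.cons_zero,
    Fin.cons_succ, sub_eq_iff_eq_add']

theorem sum_repCount [Fintype G] (k : ℕ) (A : Finset G) : ∑ z, repCount k A z = #A ^ k := by
  induction k with
  | zero => simp [repCount_zero]
  | succ k ih => rw [repCount_succ, sum_setConv, ih, pow_succ']

theorem repCount_vadd (k : ℕ) (d : G) (A : Finset G) (z : G) :
    repCount k (d +ᵥ A) z = repCount k A (z - k • d) := by
  induction k generalizing z with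
  | zero => simp [repCount_zero]
  | succ k ih =>
    simp only [repCount_succ, setConv_vadd, funext ih, sub_eq_add_neg _ (k • d),
      setConv_comp_add_right]
    rw [← sub_eq_add_neg, sub_sub, succ_nsmul']

end AddCommGroup

variable {p : ℕ}

theorem repCount_interval (k : ℕ) (t z : ZMod p) (a : ℕ) :
    repCount k (interval t a) z = repCount k (interval 0 a) (z - (k : ZMod p) * t) := by
  rw [← nsmul_eq_mul, ← repCount_vadd, vadd_interval, add_zero]

theorem exists_isBellAbout_repCount_interval (k : ℕ) (t : ZMod p) {a : ℕ} (ha : a ≤ p) :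
    ∃ c, IsBellAbout (repCount k (interval t a)) c := by
  induction k with
  | zero => exact ⟨0, repCount_zero (interval t a) ▸ IsBellAbout.single⟩
  | succ k ih =>
    obtain ⟨_, hc⟩ := ih
    rw [repCount_succ]
    exact hc.exists_setConv_interval t ha

variable [Fact p.Prime]

theorem weaklyMajorizedBy_repCount_interval (k : ℕ) (A : Finset (ZMod p)) (t : ZMod p) :
    WeaklyMajorizedBy (repCount k A) (repCount k (interval t #A)) := by
  induction k with
  | zero => simpa only [repCount_zero] using .refl _
  | succ k ih =>
    intro B
    obtain ⟨_, hbell⟩ := exists_isBellAbout_repCount_interval k t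
      (card_le_modulus A)
    obtain ⟨v, hv⟩ := exists_sum_setConv_le_sum_interval ih hbell A B t
    refine ⟨interval v #B, card_interval v (card_le_modulus B), ?_⟩
    simpa only [repCount_succ] using hv

theorem exists_sum_repCount_succ_le_sum_interval (k : ℕ) (A B : Finset (ZMod p)) :
    ∃ v : ZMod p, ∑ x ∈ B, repCount (k + 1) A x ≤
      ∑ x ∈ interval v #B, repCount (k + 1) (interval 0 #A) x := by
  obtain ⟨_, hbell⟩ := exists_isBellAbout_repCount_interval k (0 : ZMod p)
    (card_le_modulus A)
  simpa only [repCount_succ] using exists_sum_setConv_le_sum_interval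
    (weaklyMajorizedBy_repCount_interval k A 0) hbell A B 0

-- Translating the interval by `t` moves its complement by `t` but its `(k + 1)`-fold sums by
-- `(k + 1) t`, so that any relative position of the two is attained when `k` is invertible.
theorem exists_skcount_succ_interval_le {k : ℕ} (hk : (k : ZMod p) ≠ 0) (A : Finset (ZMod p)) :
    ∃ t : ZMod p, skcount (k + 1) (interval t #A) ≤ skcount (k + 1) A := by
  have hA : #A ≤ p := card_le_modulus A
  obtain ⟨v, hv⟩ := exists_sum_repCount_succ_le_sum_interval k A Aᶜ
  obtain ⟨t, ht⟩ : ∃ t : ZMod p, k * t = #A - v := ⟨_, mul_div_cancel₀ _ hk⟩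
  have hcompl : ∑ x ∈ Aᶜ, repCount (k + 1) A x ≤
      ∑ x ∈ (interval t #A)ᶜ, repCount (k + 1) (interval t #A) x := by
    refine hv.trans_eq ?_
    rw [compl_interval t hA, card_compl, ZMod.card,
      sum_interval _ _ (Nat.sub_le p _), sum_interval _ _ (Nat.sub_le p _)]
    refine sum_congr rfl fun j _ => ?_
    rw [repCount_interval _ t]
    congr 1
    push_cast
    linear_combination ht
  have htotal := sum_add_sum_compl A (repCount (k + 1) A)
  have htotal_interval := sum_add_sum_compl (interval t #A) (repCount (k + 1) (interval t #A))
  rw [sum_repCount] at htotal htotal_interval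
  rw [card_interval t hA] at htotal_interval
  refine ⟨t, ?_⟩
  rw [skcount_eq_sum_repCount, skcount_eq_sum_repCount]
  omega

end RepCount

theorem stmt_6 (p : ℕ) (hp : p.Prime) (hp3 : 3 ≤ p) (k : ℕ) (hk : 2 ≤ k)
    (hk1 : ¬ k ≡ 1 [MOD p]) (a : ℕ) (ha : a ≤ p) :
    ∃ t : ZMod p,
      ∀ A : Finset (ZMod p), A.card = a → skcount k (interval t a) ≤ skcount k A := by
  have : Fact p.Prime := ⟨hp⟩
  obtain ⟨k, rfl⟩ := Nat.exists_eq_add_of_le' (one_le_two.trans hk)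
  have hk0 : (k : ZMod p) ≠ 0 := fun h => hk1 <| by
    rw [← ZMod.natCast_eq_natCast_iff, Nat.cast_add, h, zero_add]
  obtain ⟨A, hA, hmin⟩ := exists_min_image (powersetCard a (univ : Finset (ZMod p)))
    (skcount (k + 1)) (powersetCard_nonempty.mpr (by rwa [card_univ, ZMod.card]))
  obtain ⟨t, ht⟩ := exists_skcount_succ_interval_le hk0 A
  rw [mem_powersetCard_univ] at hA
  rw [hA] at ht
  exact ⟨t, fun B hB => ht.trans (hmin B (mem_powersetCard_univ.mpr hB))⟩
end

section
/- Let p ≥ 7 be prime and a ∈ [3,p-3]. If k ≡ 1 (mod p) is sufficiently large and at least one of a, k is odd, then s_k(a) < s_k(I) where I = {0,...,a-1}; in fact among all a-subsets of Z_p, arithmetic progressions maximize s_k. -/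
/-- The interval `[a] = {0, 1, ..., a-1}` in `ZMod p`. -/
def initInterval (p a : ℕ) : Finset (ZMod p) :=
  (Finset.range a).image (fun j : ℕ => (j : ZMod p))

/-!
By orthogonality of characters, `p * s_k(A)` is the sum of `conj (S γ) * S γ ^ k` over all
frequencies `γ`, where `S` is the exponential sum of `A`; the frequency `0` contributes
`|A| ^ (k + 1)`. At `γ ≠ 0` the maximum `M` of `|S γ|` over sets of a given size is attained
exactly by progressions: exchanging an element of a maximizer for a non-element shows that the set
is cut out by a half-plane, so that it has a single left endpoint after dilation. Hence for large
`k` the frequencies `γ ≠ 0` contribute little compared to `M ^ (k + 1)` for any set which is not a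
progression. A progression of length `a` has the same count as the one which is symmetric about
`0`, because `k ≡ 1`. The exponential sums of the latter are real, and those of modulus `M` have
`(k + 1)`-st power `M ^ (k + 1)`, since `k + 1` is even or they are positive.
-/

section

open Finset ComplexConjugate
open ZMod (stdAddChar)
open scoped Pointwise

/-- `A` is an arithmetic progression of length `a` with invertible common difference, encoded as
the image of `initInterval N a` under an invertible affine map. -/
def IsProgression {N : ℕ} (a : ℕ) (A : Finset (ZMod N)) : Prop :=
  ∃ (x : ZMod N) (u : (ZMod N)ˣ), A = x +ᵥ u • initInterval N a

theorem smul_vadd_finset {M G : Type*} [DecidableEq G] [AddZeroClass G] [DistribSMul M G] (c : M)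
    (x : G) (A : Finset G) : c • (x +ᵥ A) = c • x +ᵥ c • A := by
  simp only [smul_finset_def, vadd_finset_def, image_image, Function.comp_def, vadd_eq_add,
    smul_add]

section Interval

variable {N : ℕ}

theorem card_initInterval {a : ℕ} (ha : a ≤ N) : #(initInterval N a) = a := by
  have hinj : Set.InjOn (fun j : ℕ => (j : ZMod N)) (range a) :=
    (CharP.natCast_injOn_Iio (ZMod N) N).mono fun j hj => (mem_range.1 hj).trans_le ha
  rw [initInterval, card_image_of_injOn hinj, card_range]

theorem neg_initInterval (N a : ℕ) : -initInterval N a = (1 - a : ZMod N) +ᵥ initInterval N a := by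
  have hreflect : ∀ j ∈ range a, -((a - 1 - j : ℕ) : ZMod N) = (1 - a : ZMod N) + j := by
    intro j hj
    have hsum : (a - 1 - j) + (j + 1) = a := by grind
    have hcast := congrArg (Nat.cast : ℕ → ZMod N) hsum
    push_cast at hcast
    linear_combination -hcast
  calc -initInterval N a
      = ((range a).image fun j => a - 1 - j).image fun j : ℕ => -(j : ZMod N) := by
        rw [range_image_pred_top_sub, initInterval, ← image_neg_eq_neg, image_image,
          Function.comp_def]
    _ = (range a).image fun j : ℕ => (1 - a : ZMod N) + j := by
        rw [image_image]
        exact image_congr hreflect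
    _ = (1 - a : ZMod N) +ᵥ initInterval N a := by
        rw [initInterval, vadd_finset_def, image_image]
        rfl

theorem eq_range_card_of_isLowerSet {J : Finset ℕ} (hJ : IsLowerSet (J : Set ℕ)) :
    J = range #J := by
  refine eq_of_subset_of_card_le (fun j hj => mem_range.2 ?_) (card_range _).le
  have hsub : range (j + 1) ⊆ J := fun i hi => hJ (Nat.le_of_lt_succ (mem_range.1 hi)) hj
  simpa using card_le_card hsub

theorem eq_vadd_initInterval_of_unique_left_endpoint [NeZero N] {A : Finset (ZMod N)} {z : ZMod N}
    (hz : ∀ x ∈ A, x - 1 ∉ A → x = z) : A = z +ᵥ initInterval N #A := by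
  set J : Finset ℕ := {j ∈ range N | z + (j : ZMod N) ∈ A} with hJ
  have hlower : IsLowerSet (J : Set ℕ) := by
    refine fun j i hij hj => antitone_nat_of_succ_le (f := (· ∈ J)) (fun m hm => ?_) hij hj
    simp only [hJ, mem_filter, mem_range] at hm ⊢
    refine ⟨by omega, by_contra fun hmA => ?_⟩
    have hzero := hz _ hm.2 (by convert hmA using 2; push_cast; ring)
    rw [add_eq_left, ZMod.natCast_eq_zero_iff] at hzero
    exact Nat.not_dvd_of_pos_of_lt m.succ_pos hm.1 hzero
  have hAJ : A = z +ᵥ J.image (Nat.cast : ℕ → ZMod N) := by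
    ext x
    simp only [hJ, mem_vadd_finset, mem_image, mem_filter, mem_range, vadd_eq_add]
    constructor
    · exact fun hx => ⟨x - z, ⟨(x - z).val, ⟨ZMod.val_lt _, by simpa using hx⟩, by simp⟩, by simp⟩
    · rintro ⟨_, ⟨j, hj, rfl⟩, rfl⟩
      exact hj.2
  rw [eq_range_card_of_isLowerSet hlower] at hAJ
  have hJN : #J ≤ N := (card_filter_le _ _).trans (card_range N).le
  have hcard : #A = #J := by
    rw [hAJ, card_vadd_finset]
    exact card_initInterval hJN
  rw [hcard]
  exact hAJ

theorem isProgression_univ [NeZero N] : IsProgression N (univ : Finset (ZMod N)) := by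
  refine ⟨0, 1, ?_⟩
  have h := eq_vadd_initInterval_of_unique_left_endpoint (A := (univ : Finset (ZMod N)))
    (z := 0) (by simp)
  rwa [card_univ, ZMod.card, ← one_smul (ZMod N)ˣ (initInterval N N)] at h

theorem card_lt_of_not_isProgression [NeZero N] {A : Finset (ZMod N)}
    (hA : ¬IsProgression #A A) : #A < N := by
  have hne : A ≠ univ := by
    rintro rfl
    rw [card_univ, ZMod.card] at hA
    exact hA isProgression_univ
  simpa only [ZMod.card] using (card_lt_iff_ne_univ A).2 hne

theorem isProgression_image_range (a : ℕ) (x : ZMod N) {d : ZMod N} (hd : IsUnit d) :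
    IsProgression a ((range a).image fun j : ℕ => x + (j : ZMod N) * d) := by
  obtain ⟨u, rfl⟩ := hd
  refine ⟨x, u, ?_⟩
  simp only [initInterval, smul_finset_def, vadd_finset_def, image_image, Function.comp_def,
    Units.smul_def, smul_eq_mul, vadd_eq_add, mul_comm]

end Interval

section Count

variable {N : ℕ}

theorem skcount_image_equiv {k : ℕ} (A : Finset (ZMod N)) (e : ZMod N ≃ ZMod N)
    (he : ∀ x : Fin (k + 1) → ZMod N,
      e (x 0) = ∑ i : Fin k, e (x i.succ) ↔ x 0 = ∑ i : Fin k, x i.succ) :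
    skcount k (A.image e) = skcount k A :=
  (card_equiv (Equiv.piCongrRight fun _ => e) fun x => by
    simp [Fintype.mem_piFinset, he x]).symm

theorem skcount_units_smul (k : ℕ) (u : (ZMod N)ˣ) (A : Finset (ZMod N)) :
    skcount k (u • A) = skcount k A :=
  skcount_image_equiv A (MulAction.toPerm u) fun x => by
    simp only [MulAction.toPerm_apply, ← smul_sum, smul_left_cancel_iff]

theorem skcount_vadd {k : ℕ} (hk : (k : ZMod N) = 1) (c : ZMod N) (A : Finset (ZMod N)) :
    skcount k (c +ᵥ A) = skcount k A :=
  skcount_image_equiv A (AddAction.toPerm c) fun x => by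
    simp [sum_add_distrib, hk]

theorem IsProgression.skcount_eq {k a : ℕ} (hk : (k : ZMod N) = 1) {A : Finset (ZMod N)}
    (hA : IsProgression a A) : skcount k A = skcount k (initInterval N a) := by
  obtain ⟨x, u, rfl⟩ := hA
  rw [skcount_vadd hk, skcount_units_smul]

end Count

section ExpSum

theorem addChar_map_sum_eq_prod {ι G M : Type*} [AddCommMonoid G] [CommMonoid M]
    (ψ : AddChar G M) (s : Finset ι) (f : ι → G) : ψ (∑ i ∈ s, f i) = ∏ i ∈ s, ψ (f i) :=
  map_prod ψ.toMonoidHom (fun i => Multiplicative.ofAdd (f i)) s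

variable {N : ℕ} [NeZero N]

/-- The exponential sum of `A` at the frequency `γ`, i.e. the Fourier transform of the indicator
function of `A`, with the sign convention `exp (+2πi γ x / N)`. -/
noncomputable def expSum (A : Finset (ZMod N)) (γ : ZMod N) : ℂ :=
  ∑ x ∈ A, stdAddChar (γ * x)

theorem expSum_zero (A : Finset (ZMod N)) : expSum A 0 = #A := by
  simp [expSum]

theorem expSum_vadd (c : ZMod N) (A : Finset (ZMod N)) (γ : ZMod N) :
    expSum (c +ᵥ A) γ = stdAddChar (γ * c) * expSum A γ := by
  rw [expSum, vadd_finset_def, sum_image (AddAction.injective c).injOn, expSum, mul_sum]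
  simp only [vadd_eq_add, mul_add, AddChar.map_add_eq_mul]

theorem norm_expSum_vadd (c : ZMod N) (A : Finset (ZMod N)) (γ : ZMod N) :
    ‖expSum (c +ᵥ A) γ‖ = ‖expSum A γ‖ := by
  rw [expSum_vadd, norm_mul, AddChar.norm_apply, one_mul]

theorem expSum_units_smul (u : (ZMod N)ˣ) (A : Finset (ZMod N)) (γ : ZMod N) :
    expSum (u • A) γ = expSum A (γ * u) := by
  rw [expSum, smul_finset_def, sum_image (MulAction.injective u).injOn]
  simp only [expSum, Units.smul_def, smul_eq_mul, mul_assoc]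

theorem expSum_neg (A : Finset (ZMod N)) (γ : ZMod N) : expSum (-A) γ = expSum A (-γ) := by
  simp only [expSum, sum_neg_index, mul_neg, neg_mul]

theorem conj_expSum (A : Finset (ZMod N)) (γ : ZMod N) :
    conj (expSum A γ) = expSum A (-γ) := by
  simp only [expSum, map_sum, neg_mul, AddChar.map_neg_eq_conj]

theorem ofReal_re_expSum {A : Finset (ZMod N)} (hA : -A = A) (γ : ZMod N) :
    ((expSum A γ).re : ℂ) = expSum A γ :=
  Complex.conj_eq_iff_re.1 (by rw [conj_expSum, ← expSum_neg, hA])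

theorem prod_expSum {ι : Type*} [Fintype ι] [DecidableEq ι] (A : ι → Finset (ZMod N))
    (g : ι → ZMod N) :
    ∏ i, expSum (A i) (g i) = ∑ x ∈ Fintype.piFinset A, stdAddChar (∑ i, g i * x i) := by
  simp only [expSum, prod_univ_sum, addChar_map_sum_eq_prod]

theorem conj_expSum_mul_expSum_pow (k : ℕ) (A : Finset (ZMod N)) (γ : ZMod N) :
    conj (expSum A γ) * expSum A γ ^ k =
      ∑ x ∈ Fintype.piFinset (fun _ : Fin (k + 1) => A),
        stdAddChar (γ * ((∑ i : Fin k, x i.succ) - x 0)) := by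
  have h := prod_expSum (fun _ : Fin (k + 1) => A) (Fin.cons (-γ) fun _ => γ)
  simp only [Fin.prod_univ_succ, Fin.sum_univ_succ, Fin.cons_zero, Fin.cons_succ, prod_const,
    card_univ, Fintype.card_fin, ← mul_sum] at h
  rw [conj_expSum, h]
  refine sum_congr rfl fun x _ => ?_
  congr 1
  ring

theorem natCast_mul_skcount (k : ℕ) (A : Finset (ZMod N)) :
    (N : ℂ) * skcount k A = ∑ γ, conj (expSum A γ) * expSum A γ ^ k := by
  simp only [conj_expSum_mul_expSum_pow]
  rw [sum_comm, skcount, card_filter]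
  push_cast
  rw [mul_sum]
  refine sum_congr rfl fun x _ => ?_
  rw [AddChar.sum_mulShift _ (ZMod.isPrimitive_stdAddChar N)]
  simp [sub_eq_zero, eq_comm (a := x 0)]

theorem mul_skcount_eq_add_sum (k : ℕ) (A : Finset (ZMod N)) :
    (N : ℝ) * skcount k A =
      #A ^ (k + 1) + ∑ γ ∈ univ.erase 0, (conj (expSum A γ) * expSum A γ ^ k).re := by
  have h := congrArg Complex.re (natCast_mul_skcount k A)
  rw [Complex.re_sum, ← add_sum_erase _ _ (mem_univ 0), expSum_zero, Complex.conj_natCast,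
    ← pow_succ'] at h
  exact_mod_cast h

theorem card_univ_erase_zero : (#((univ : Finset (ZMod N)).erase 0) : ℝ) = N - 1 := by
  rw [card_erase_of_mem (mem_univ _), card_univ, ZMod.card, Nat.cast_pred (NeZero.pos N)]

theorem mul_skcount_le_of_norm_expSum_le {k : ℕ} {A : Finset (ZMod N)} {ε : ℝ}
    (h : ∀ γ ≠ 0, ‖expSum A γ‖ ^ (k + 1) ≤ ε) :
    (N : ℝ) * skcount k A ≤ #A ^ (k + 1) + (N - 1) * ε := by
  rw [mul_skcount_eq_add_sum, ← card_univ_erase_zero, ← nsmul_eq_mul]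
  gcongr
  refine sum_le_card_nsmul _ _ _ fun γ hγ => (Complex.re_le_norm _).trans ?_
  rw [norm_mul, norm_pow, Complex.norm_conj, ← pow_succ']
  exact h γ (ne_of_mem_erase hγ)

theorem le_mul_skcount_of_neg_eq_self [Fact (1 < N)] {k : ℕ} {A : Finset (ZMod N)}
    (hA : -A = A) {ε : ℝ} (hε : 0 ≤ ε) (h : ∀ γ ≠ 0, -ε ≤ (expSum A γ).re ^ (k + 1)) :
    #A ^ (k + 1) + (expSum A 1).re ^ (k + 1) - (N - 1) * ε ≤ N * skcount k A := by
  have hterm : ∀ γ, (conj (expSum A γ) * expSum A γ ^ k).re = (expSum A γ).re ^ (k + 1) := by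
    intro γ
    rw [← ofReal_re_expSum hA γ, Complex.conj_ofReal, ← pow_succ', ← Complex.ofReal_pow,
      Complex.ofReal_re, Complex.ofReal_re]
  have hone := single_le_sum (f := fun γ => (expSum A γ).re ^ (k + 1) + ε)
    (fun γ hγ => neg_le_iff_add_nonneg.1 (h γ (ne_of_mem_erase hγ)))
    (mem_erase.2 ⟨one_ne_zero, mem_univ (1 : ZMod N)⟩)
  rw [sum_add_distrib, sum_const, nsmul_eq_mul, card_univ_erase_zero] at hone
  rw [mul_skcount_eq_add_sum, sum_congr rfl fun γ _ => hterm γ]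
  linarith

end ExpSum

section Extremal

variable {N : ℕ} [NeZero N]

/-- Among the sets with as many elements as `A`, the modulus of the exponential sum at the
frequency `γ` is maximal at `A`. -/
def MaximizesExpSum (A : Finset (ZMod N)) (γ : ZMod N) : Prop :=
  ∀ B : Finset (ZMod N), #B = #A → ‖expSum B γ‖ ≤ ‖expSum A γ‖

theorem inner_neg_of_norm_add_le {E : Type*} [NormedAddCommGroup E] [InnerProductSpace ℝ E]
    {s δ : E} (hδ : δ ≠ 0) (h : ‖s + δ‖ ≤ ‖s‖) : inner ℝ s δ < 0 := by
  have hsq := pow_le_pow_left₀ (norm_nonneg _) h 2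
  have hpos : 0 < ‖δ‖ ^ 2 := by positivity
  rw [norm_add_sq_real] at hsq
  linarith

theorem MaximizesExpSum.inner_lt_inner {A : Finset (ZMod N)} {γ : ZMod N}
    (hA : MaximizesExpSum A γ) (hγ : IsUnit γ) {x y : ZMod N} (hx : x ∈ A) (hy : y ∉ A) :
    inner ℝ (expSum A γ) (stdAddChar (γ * y)) < inner ℝ (expSum A γ) (stdAddChar (γ * x)) := by
  have hy' : y ∉ A.erase x := fun h => hy (mem_of_mem_erase h)
  have hexchange : expSum (insert y (A.erase x)) γ =
      expSum A γ + (stdAddChar (γ * y) - stdAddChar (γ * x)) := by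
    rw [expSum, sum_insert hy', expSum, ← add_sum_erase A _ hx]
    ring
  have hne : (stdAddChar (γ * y) - stdAddChar (γ * x) : ℂ) ≠ 0 := by
    refine sub_ne_zero.2 fun h => hy ?_
    rwa [hγ.mul_left_cancel (ZMod.injective_stdAddChar h)]
  have hle := hA (insert y (A.erase x)) (by rw [card_insert_of_notMem hy', card_erase_add_one hx])
  rw [hexchange] at hle
  have hneg := inner_neg_of_norm_add_le hne hle
  rwa [inner_sub_right, sub_neg] at hneg

theorem cos_sub_cos_mul_cos_sub_cos (α β δ : ℝ) :
    (Real.cos α - Real.cos (β - δ)) * (Real.cos β - Real.cos (α - δ)) =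
      -(4 * Real.sin ((α + β - δ) / 2) ^ 2 *
        (Real.sin ((α - β + δ) / 2) * Real.sin ((α - β - δ) / 2))) := by
  rw [Real.cos_sub_cos, Real.cos_sub_cos, show (β - (α - δ)) / 2 = -((α - β - δ) / 2) by ring,
    Real.sin_neg]
  ring_nf

theorem inner_stdAddChar_intCast (s : ℂ) (n : ℤ) :
    inner ℝ s (stdAddChar (n : ZMod N)) = ‖s‖ * Real.cos (2 * Real.pi * n / N - s.arg) := by
  have hmul : stdAddChar (n : ZMod N) * conj s =
      ‖s‖ * Complex.exp ((2 * Real.pi * n / N - s.arg : ℝ) * Complex.I) := by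
    conv_lhs => rw [← Complex.norm_mul_exp_arg_mul_I s]
    rw [ZMod.stdAddChar_coe, map_mul, Complex.conj_ofReal, ← Complex.exp_conj, mul_left_comm,
      ← Complex.exp_add]
    simp only [map_mul, Complex.conj_ofReal, Complex.conj_I]
    push_cast
    ring_nf
  rw [Complex.inner, hmul, Complex.re_ofReal_mul, Complex.exp_ofReal_mul_I_re]

/-- Hence a set cut out by a half-plane with normal `s` contains at most one `x` such that `x - 1`
lies outside. -/
theorem inner_sub_mul_inner_sub_nonpos (s : ℂ) {x y : ZMod N} (hxy : x ≠ y) :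
    (inner ℝ s (stdAddChar x) - inner ℝ s (stdAddChar (y - 1))) *
      (inner ℝ s (stdAddChar y) - inner ℝ s (stdAddChar (x - 1))) ≤ 0 := by
  have hN : (0 : ℝ) < N := mod_cast NeZero.pos N
  obtain ⟨b, rfl⟩ := ZMod.intCast_surjective y
  obtain ⟨m, hm, hmN, rfl⟩ : ∃ m : ℕ, 1 ≤ m ∧ m + 1 ≤ N ∧ x = ((b + m : ℤ) : ZMod N) := by
    refine ⟨(x - b).val, ?_, ZMod.val_lt _, by simp⟩
    rwa [Nat.one_le_iff_ne_zero, Ne, ZMod.val_eq_zero, sub_eq_zero]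
  set α : ℝ := 2 * Real.pi * (b + m : ℤ) / N - s.arg with hα
  set β : ℝ := 2 * Real.pi * b / N - s.arg with hβ
  set δ : ℝ := 2 * Real.pi / N with hδ
  have hpred : ∀ n : ℤ, inner ℝ s (stdAddChar ((n : ZMod N) - 1)) =
      ‖s‖ * Real.cos (2 * Real.pi * n / N - s.arg - δ) := by
    intro n
    have h := inner_stdAddChar_intCast (N := N) s (n - 1)
    push_cast at h
    rw [h, hδ]
    ring_nf
  have hsin : ∀ t : ℝ, 0 ≤ t → t ≤ N → 0 ≤ Real.sin (t * Real.pi / N) := by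
    intro t ht htN
    refine Real.sin_nonneg_of_nonneg_of_le_pi (by positivity) ?_
    rw [div_le_iff₀ hN, mul_comm]
    gcongr
  have hplus : 0 ≤ Real.sin ((α - β + δ) / 2) := by
    convert hsin (m + 1) (by positivity) (mod_cast hmN) using 2
    rw [hα, hβ, hδ]; push_cast; ring
  have hminus : 0 ≤ Real.sin ((α - β - δ) / 2) := by
    convert hsin (m - 1) (by simpa using hm) (by linarith [(mod_cast hmN : (m : ℝ) + 1 ≤ N)])
      using 2
    rw [hα, hβ, hδ]; push_cast; ring
  rw [hpred, hpred, inner_stdAddChar_intCast, inner_stdAddChar_intCast, ← hα, ← hβ, ← mul_sub,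
    ← mul_sub, mul_mul_mul_comm, cos_sub_cos_mul_cos_sub_cos, mul_neg, neg_nonpos]
  positivity

theorem MaximizesExpSum.exists_eq_vadd_initInterval {A : Finset (ZMod N)}
    (hA : MaximizesExpSum A 1) : ∃ z : ZMod N, A = z +ᵥ initInterval N #A := by
  have hunique : {x | x ∈ A ∧ x - 1 ∉ A}.Subsingleton := by
    rintro x ⟨hx, hx'⟩ y ⟨hy, hy'⟩
    by_contra hxy
    have h₁ := hA.inner_lt_inner isUnit_one hx hy'
    have h₂ := hA.inner_lt_inner isUnit_one hy hx'
    simp only [one_mul] at h₁ h₂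
    exact (mul_pos (sub_pos.2 h₁) (sub_pos.2 h₂)).not_ge (inner_sub_mul_inner_sub_nonpos _ hxy)
  rcases hunique.eq_empty_or_singleton with h | ⟨z, h⟩
  · exact ⟨0, eq_vadd_initInterval_of_unique_left_endpoint fun x hx hx' =>
      (Set.eq_empty_iff_forall_notMem.1 h x ⟨hx, hx'⟩).elim⟩
  · exact ⟨z, eq_vadd_initInterval_of_unique_left_endpoint fun x hx hx' =>
      h.subset ⟨hx, hx'⟩⟩

theorem norm_expSum_one_le (A : Finset (ZMod N)) :
    ‖expSum A 1‖ ≤ ‖expSum (initInterval N #A) 1‖ := by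
  obtain ⟨B, hB, hmax⟩ := exists_max_image (powersetCard #A univ) (fun B => ‖expSum B 1‖)
    ⟨A, mem_powersetCard_univ.2 rfl⟩
  simp only [mem_powersetCard_univ] at hB hmax
  obtain ⟨z, hz⟩ := MaximizesExpSum.exists_eq_vadd_initInterval fun C hC => hmax C (hC.trans hB)
  have h := hmax A rfl
  rwa [hz, norm_expSum_vadd, hB] at h

theorem norm_expSum_le (A : Finset (ZMod N)) {γ : ZMod N} (hγ : IsUnit γ) :
    ‖expSum A γ‖ ≤ ‖expSum (initInterval N #A) 1‖ := by
  obtain ⟨u, rfl⟩ := hγ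
  simpa only [expSum_units_smul, card_smul_finset, one_mul] using norm_expSum_one_le (u • A)

theorem maximizesExpSum_of_norm_eq {A : Finset (ZMod N)} {γ : ZMod N} (hγ : IsUnit γ)
    (h : ‖expSum A γ‖ = ‖expSum (initInterval N #A) 1‖) : MaximizesExpSum A γ := by
  intro B hB
  rw [h, ← hB]
  exact norm_expSum_le B hγ

theorem isProgression_of_norm_expSum_eq {A : Finset (ZMod N)} {γ : ZMod N} (hγ : IsUnit γ)
    (h : ‖expSum A γ‖ = ‖expSum (initInterval N #A) 1‖) : IsProgression #A A := by
  obtain ⟨u, rfl⟩ := hγ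
  have hmax : MaximizesExpSum (u • A) 1 :=
    maximizesExpSum_of_norm_eq isUnit_one (by
      rwa [expSum_units_smul, one_mul, card_smul_finset])
  obtain ⟨z, hz⟩ := hmax.exists_eq_vadd_initInterval
  rw [card_smul_finset] at hz
  refine ⟨u⁻¹ • z, u⁻¹, ?_⟩
  calc A = u⁻¹ • (z +ᵥ initInterval N #A) := by rw [← hz, inv_smul_smul]
    _ = u⁻¹ • z +ᵥ u⁻¹ • initInterval N #A := smul_vadd_finset _ _ _

theorem norm_expSum_lt_of_not_isProgression {A : Finset (ZMod N)} (hA : ¬IsProgression #A A)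
    {γ : ZMod N} (hγ : IsUnit γ) : ‖expSum A γ‖ < ‖expSum (initInterval N #A) 1‖ :=
  (norm_expSum_le A hγ).lt_of_ne fun h => hA (isProgression_of_norm_expSum_eq hγ h)

theorem MaximizesExpSum.re_pos {A : Finset (ZMod N)} {γ : ZMod N} (hmax : MaximizesExpSum A γ)
    (hγ : IsUnit γ) (hA : -A = A) (h0 : 0 ∈ A) (huniv : A ≠ univ) : 0 < (expSum A γ).re := by
  obtain ⟨y, hy⟩ : ∃ y, y ∉ A := by simpa [eq_univ_iff_forall] using huniv
  have hlt := hmax.inner_lt_inner hγ h0 hy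
  have hre := Complex.re_le_norm (stdAddChar (γ * y))
  rw [AddChar.norm_apply] at hre
  rw [mul_zero, AddChar.map_zero_eq_one, ← ofReal_re_expSum hA γ, Complex.inner, Complex.inner,
    Complex.conj_ofReal, Complex.re_mul_ofReal, Complex.re_mul_ofReal, Complex.one_re] at hlt
  by_contra! hle
  nlinarith

end Extremal

section CenteredInterval

variable {p : ℕ} [Fact p.Prime]

/-- The translate of the interval of length `a` which is symmetric about `0`, for `p ≠ 2`: its left
endpoint is `-(a - 1) / 2`, the division being the one of the field `ZMod p`. -/
def centeredInterval (p a : ℕ) [Fact p.Prime] : Finset (ZMod p) :=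
  ((1 - a) / 2 : ZMod p) +ᵥ initInterval p a

theorem card_centeredInterval {a : ℕ} (ha : a ≤ p) : #(centeredInterval p a) = a := by
  rw [centeredInterval, card_vadd_finset, card_initInterval ha]

theorem two_ne_zero_of_ne_two (hp : p ≠ 2) : (2 : ZMod p) ≠ 0 :=
  Ring.two_ne_zero (by rwa [ZMod.ringChar_zmod_n])

theorem neg_centeredInterval (hp : p ≠ 2) (a : ℕ) :
    -centeredInterval p a = centeredInterval p a := by
  have h2 := two_ne_zero_of_ne_two hp
  have hneg : -centeredInterval p a = -((1 - a) / 2 : ZMod p) +ᵥ -initInterval p a := by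
    simpa only [centeredInterval, neg_smul_finset, neg_smul, one_smul] using
      smul_vadd_finset (-1 : ZMod p) ((1 - a) / 2 : ZMod p) (initInterval p a)
  rw [hneg, neg_initInterval, vadd_vadd, centeredInterval]
  congr 1
  field_simp
  ring

theorem zero_mem_centeredInterval (hp : p ≠ 2) {a : ℕ} (ha : Odd a) :
    0 ∈ centeredInterval p a := by
  have h2 := two_ne_zero_of_ne_two hp
  obtain ⟨b, rfl⟩ := ha
  refine mem_vadd_finset.2 ⟨b, mem_image_of_mem _ (mem_range.2 (by omega)), ?_⟩
  push_cast
  rw [vadd_eq_add]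
  field_simp
  ring

theorem norm_expSum_centeredInterval_one (a : ℕ) :
    ‖expSum (centeredInterval p a) 1‖ = ‖expSum (initInterval p a) 1‖ :=
  norm_expSum_vadd _ _ _

theorem re_expSum_centeredInterval_pow (hp : p ≠ 2) {a k : ℕ} (ha : a < p)
    (hak : Odd a ∨ Odd k) {γ : ZMod p} (hγ : IsUnit γ)
    (hpeak : ‖expSum (centeredInterval p a) γ‖ = ‖expSum (initInterval p a) 1‖) :
    (expSum (centeredInterval p a) γ).re ^ (k + 1) = ‖expSum (initInterval p a) 1‖ ^ (k + 1) := by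
  have hcard := card_centeredInterval ha.le
  have hsymm := neg_centeredInterval hp a
  have habs : |(expSum (centeredInterval p a) γ).re| = ‖expSum (initInterval p a) 1‖ := by
    rw [← hpeak, ← Real.norm_eq_abs, ← Complex.norm_real, ofReal_re_expSum hsymm]
  rw [← habs]
  rcases hak with ha_odd | hk_odd
  · have hmax : MaximizesExpSum (centeredInterval p a) γ :=
      maximizesExpSum_of_norm_eq hγ (by rw [hcard, hpeak])
    have hproper : centeredInterval p a ≠ univ := fun h => by
      rw [h, card_univ, ZMod.card] at hcard
      exact ha.ne' hcard
    rw [abs_of_pos (hmax.re_pos hγ hsymm (zero_mem_centeredInterval hp ha_odd) hproper)]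
  · rw [(hk_odd.add_odd odd_one).pow_abs]

theorem neg_le_re_expSum_centeredInterval_pow (hp : p ≠ 2) {a k : ℕ} (ha : a < p)
    (hak : Odd a ∨ Odd k) {γ : ZMod p} (hγ : IsUnit γ) {ε : ℝ} (hε : 0 ≤ ε)
    (hsmall : ‖expSum (centeredInterval p a) γ‖ < ‖expSum (initInterval p a) 1‖ →
      ‖expSum (centeredInterval p a) γ‖ ^ (k + 1) ≤ ε) :
    -ε ≤ (expSum (centeredInterval p a) γ).re ^ (k + 1) := by
  have hle := norm_expSum_le (centeredInterval p a) hγ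
  rw [card_centeredInterval ha.le] at hle
  rcases hle.eq_or_lt with hpeak | hlt
  · rw [re_expSum_centeredInterval_pow hp ha hak hγ hpeak]
    exact (neg_nonpos.2 hε).trans (by positivity)
  · refine (abs_le.1 ?_).1
    rw [abs_pow]
    exact (pow_le_pow_left₀ (abs_nonneg _) (Complex.abs_re_le_norm _) _).trans (hsmall hlt)

end CenteredInterval

section Comparison

theorem eventually_forall_pow_le_mul_pow {ι : Type*} [Finite ι] {f g : ι → ℝ} (hf : ∀ i, 0 ≤ f i)
    {c : ℝ} (hc : 0 < c) :
    ∀ᶠ n : ℕ in Filter.atTop, ∀ i, f i < g i → f i ^ n ≤ c * g i ^ n := by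
  refine Filter.eventually_all.2 fun i => ?_
  by_cases hfg : f i < g i
  · filter_upwards [(isLittleO_pow_pow_of_lt_left (hf i) hfg).def hc] with n hn _
    rwa [Real.norm_of_nonneg (pow_nonneg (hf i) n),
      Real.norm_of_nonneg (pow_nonneg ((hf i).trans hfg.le) n)] at hn
  · exact Filter.Eventually.of_forall fun n h => absurd h hfg

variable {p : ℕ} [Fact p.Prime]

theorem skcount_lt_skcount_centeredInterval (hp : p ≠ 2) {k : ℕ} {A : Finset (ZMod p)}
    (hA : ¬IsProgression #A A) (hk : Odd #A ∨ Odd k)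
    (hsmall : ∀ (B : Finset (ZMod p)) (γ : ZMod p),
      ‖expSum B γ‖ < ‖expSum (initInterval p #B) 1‖ →
        ‖expSum B γ‖ ^ (k + 1) ≤ (2 * p : ℝ)⁻¹ * ‖expSum (initInterval p #B) 1‖ ^ (k + 1)) :
    skcount k A < skcount k (centeredInterval p #A) := by
  have hp0 : (0 : ℝ) < p := mod_cast (Fact.out : p.Prime).pos
  have : Fact (1 < p) := ⟨(Fact.out : p.Prime).one_lt⟩
  have hAp := card_lt_of_not_isProgression hA
  have hcard := card_centeredInterval hAp.le
  set M : ℝ := ‖expSum (initInterval p #A) 1‖ with hM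
  set ε : ℝ := (2 * p : ℝ)⁻¹ * M ^ (k + 1) with hε
  have hA_lt : ∀ γ ≠ 0, ‖expSum A γ‖ < M := fun γ hγ =>
    norm_expSum_lt_of_not_isProgression hA hγ.isUnit
  have hM0 : 0 < M := (norm_nonneg _).trans_lt (hA_lt 1 one_ne_zero)
  have hε0 : 0 < ε := by positivity
  have hMε : M ^ (k + 1) = 2 * p * ε := by rw [hε]; field_simp
  have hupper := mul_skcount_le_of_norm_expSum_le fun γ hγ => hsmall A γ (hA_lt γ hγ)
  have hlower := le_mul_skcount_of_neg_eq_self (neg_centeredInterval hp #A) hε0.le fun γ hγ =>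
    neg_le_re_expSum_centeredInterval_pow hp hAp hk hγ.isUnit hε0.le fun hlt => by
      simpa only [hcard] using hsmall (centeredInterval p #A) γ (by rwa [hcard])
  rw [hcard, re_expSum_centeredInterval_pow hp hAp hk isUnit_one
    (norm_expSum_centeredInterval_one _), ← hM, hMε] at hlower
  have hlt : (p : ℝ) * skcount k A < p * skcount k (centeredInterval p #A) := by linarith
  exact_mod_cast lt_of_mul_lt_mul_left hlt hp0.le

theorem eventually_skcount_lt_skcount_centeredInterval (hp : p ≠ 2) :
    ∀ᶠ k : ℕ in Filter.atTop, ∀ A : Finset (ZMod p), ¬IsProgression #A A → (Odd #A ∨ Odd k) →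
      skcount k A < skcount k (centeredInterval p #A) := by
  have hpos : 0 < (2 * p : ℝ)⁻¹ := by
    have := (Fact.out : p.Prime).pos
    positivity
  filter_upwards [(Filter.tendsto_add_atTop_nat 1).eventually
    (eventually_forall_pow_le_mul_pow
      (f := fun q : Finset (ZMod p) × ZMod p => ‖expSum q.1 q.2‖)
      (g := fun q => ‖expSum (initInterval p #q.1) 1‖) (fun _ => norm_nonneg _) hpos)]
    with k hk A hA hodd
  exact skcount_lt_skcount_centeredInterval hp hA hodd fun B γ => hk (B, γ)

theorem eventually_skcount_lt_skcount_initInterval (hp : p ≠ 2) :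
    ∀ᶠ k : ℕ in Filter.atTop, (k : ZMod p) = 1 →
      ∀ A : Finset (ZMod p), ¬IsProgression #A A → (Odd #A ∨ Odd k) →
        skcount k A < skcount k (initInterval p #A) := by
  filter_upwards [eventually_skcount_lt_skcount_centeredInterval hp] with k hlt hk A hA hodd
  exact (hlt A hA hodd).trans_eq (skcount_vadd hk _ _)

end Comparison

section Counting

theorem choose_three_le_choose {n a : ℕ} (ha : 3 ≤ a) (han : a + 3 ≤ n) :
    n.choose 3 ≤ n.choose a := by
  have hleft : ∀ b, 3 ≤ b → b ≤ n / 2 → n.choose 3 ≤ n.choose b := by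
    intro b hb
    induction b, hb using Nat.le_induction with
    | base => exact fun _ => le_rfl
    | succ m _ ih =>
      exact fun hm => (ih (by omega)).trans (Nat.choose_le_succ_of_lt_half_left (by omega))
  rcases le_or_gt a (n / 2) with h | h
  · exact hleft a ha h
  · rw [← Nat.choose_symm (show a ≤ n by omega)]
    exact hleft _ (by omega) (by omega)

theorem mul_half_lt_choose_three {n : ℕ} (hn : 6 ≤ n) : n * (n / 2) < n.choose 3 := by
  obtain ⟨m, rfl⟩ := Nat.exists_eq_add_of_le' hn
  have hchoose : (m + 6) * (m + 5) * (m + 4) = 6 * (m + 6).choose 3 := by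
    have h := Nat.descFactorial_eq_factorial_mul_choose (m + 6) 3
    simp only [Nat.descFactorial, Nat.factorial, Nat.reduceSubDiff, tsub_zero, mul_one] at h
    linarith
  have hhalf : (m + 6) * (2 * ((m + 6) / 2)) ≤ (m + 6) * (m + 6) :=
    Nat.mul_le_mul_left _ (Nat.mul_div_le _ 2)
  have hcubic : 3 * ((m + 6) * (m + 6)) < (m + 6) * (m + 5) * (m + 4) := by nlinarith
  linarith

variable {N : ℕ}

theorem IsProgression.exists_natCast_le_half [Fact (1 < N)] {a : ℕ} {A : Finset (ZMod N)}
    (hA : IsProgression a A) :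
    ∃ (x : ZMod N) (d : ℕ), d ∈ Icc 1 (N / 2) ∧ A = x +ᵥ (d : ZMod N) • initInterval N a := by
  obtain ⟨x, u, rfl⟩ := hA
  set d := (u : ZMod N).valMinAbs.natAbs with hd
  have hdIcc : d ∈ Icc 1 (N / 2) := by
    refine mem_Icc.2 ⟨Nat.one_le_iff_ne_zero.2 ?_, ZMod.natAbs_valMinAbs_le _⟩
    simp [hd]
  have hcast := ZMod.natCast_natAbs_valMinAbs (u : ZMod N)
  rw [← hd] at hcast
  split_ifs at hcast
  · exact ⟨x, d, hdIcc, by rw [hcast]; rfl⟩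
  · have hu : u • initInterval N a = (d : ZMod N) • -initInterval N a := by
      rw [hcast, smul_finset_neg, neg_smul_finset, neg_neg]
      rfl
    exact ⟨_, d, hdIcc, by rw [hu, neg_initInterval, smul_vadd_finset, vadd_vadd]⟩

open Classical in
theorem card_filter_isProgression_le [Fact (1 < N)] (a : ℕ) :
    #{A : Finset (ZMod N) | IsProgression a A} ≤ N * (N / 2) := by
  have hsub : ({A | IsProgression a A} : Finset (Finset (ZMod N))) ⊆
      (univ ×ˢ Icc 1 (N / 2)).image
        fun q : ZMod N × ℕ => q.1 +ᵥ (q.2 : ZMod N) • initInterval N a := by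
    intro A hA
    obtain ⟨x, d, hd, rfl⟩ := (mem_filter.1 hA).2.exists_natCast_le_half
    exact mem_image.2 ⟨(x, d), mem_product.2 ⟨mem_univ x, hd⟩, rfl⟩
  refine (card_le_card hsub).trans (card_image_le.trans_eq ?_)
  rw [card_product, card_univ, ZMod.card, Nat.card_Icc, Nat.add_sub_cancel]

theorem exists_card_eq_not_isProgression {a : ℕ} (ha : 3 ≤ a) (hap : a + 3 ≤ N) :
    ∃ A : Finset (ZMod N), #A = a ∧ ¬IsProgression a A := by
  classical
  have : Fact (1 < N) := ⟨by omega⟩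
  by_contra! hall
  have hsub : powersetCard a univ ⊆ ({A | IsProgression a A} : Finset (Finset (ZMod N))) :=
    fun A hA => mem_filter.2 ⟨mem_univ A, hall A (mem_powersetCard_univ.1 hA)⟩
  have hcard := (card_le_card hsub).trans (card_filter_isProgression_le a)
  rw [card_powersetCard, card_univ, ZMod.card] at hcard
  exact hcard.not_gt <|
    (mul_half_lt_choose_three (by omega)).trans_le (choose_three_le_choose ha hap)

end Counting

end

theorem stmt_16 (p : ℕ) (hp : p.Prime) (hp7 : 7 ≤ p)
    (a : ℕ) (ha : 3 ≤ a) (ha' : a ≤ p - 3) :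
    ∃ k0 : ℕ, ∀ k : ℕ, k0 ≤ k → k ≡ 1 [MOD p] → (Odd a ∨ Odd k) →
      (∃ A : Finset (ZMod p), A.card = a ∧ skcount k A < skcount k (initInterval p a)) ∧
      (∀ A : Finset (ZMod p), A.card = a → ∀ x d : ZMod p, d ≠ 0 →
        skcount k A ≤ skcount k ((Finset.range a).image (fun j : ℕ => x + (j : ZMod p) * d))) := by
  have : Fact p.Prime := ⟨hp⟩
  obtain ⟨k0, hk0⟩ := Filter.eventually_atTop.1
    (eventually_skcount_lt_skcount_initInterval (p := p) (by omega))
  refine ⟨k0, fun k hk hmod hodd => ?_⟩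
  have hk1 : (k : ZMod p) = 1 := by
    simpa using (ZMod.natCast_eq_natCast_iff k 1 p).2 hmod
  have hlt := hk0 k hk hk1
  constructor
  · obtain ⟨A, rfl, hA⟩ := exists_card_eq_not_isProgression (N := p) ha (by omega)
    exact ⟨A, rfl, hlt A hA hodd⟩
  · rintro A rfl x d hd
    rw [(isProgression_image_range _ x hd.isUnit).skcount_eq hk1]
    by_cases hA : IsProgression A.card A
    · exact (hA.skcount_eq hk1).le
    · exact (hlt A hA hodd).le
end
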